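/- Let ω = e^{2πi/3}, θ₁ = 2cos(2π/7), θ₂ = θ₁² − 2 = 2cos(4π/7), θ₃ = θ₂² − 2 = 2cos(8π/7), all in ℂ. For ℓ ∈ {0, 1, 2} and a_ℓ, b_ℓ, c_ℓ ∈ ℤ[ω], set x_ℓ = a_ℓ + b_ℓθ₁ + c_ℓθ₁², σ(x_ℓ) = a_ℓ + b_ℓθ₂ + c_ℓθ₂², σ²(x_ℓ) = a_ℓ + b_ℓθ₃ + c_ℓθ₃². If not all a_ℓ, b_ℓ, c_ℓ are zero, then the determinant of the 3×3 complex matrix [[x₀, x₁, x₂], [ω·σ(x₂), σ(x₀), σ(x₁)], [ω·σ²(x₁), ω·σ²(x₂), σ²(x₀)]] is a nonzero element of ℤ[ω]; in particular its squared modulus is at least 1. (This is the full-diversity / non-vanishing determinant property of the 3×3 perfect space-time code built on the cyclic division algebra (ℚ(ω, θ₁)/ℚ(ω), σ, ω).) -/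

import Mathlib

noncomputable section

open Complex

/-- `ω = e^{2πi/3}`, the primitive cube root of unity. -/
def om : ℂ := Complex.exp (2 * Real.pi * Complex.I / 3)

/-- `θ₁ = 2cos(2π/7)`. -/
def t1 : ℂ := 2 * Real.cos (2 * Real.pi / 7)

/-- `θ₂ = θ₁² − 2 = 2cos(4π/7)`. -/
def t2 : ℂ := t1 ^ 2 - 2

/-- `θ₃ = θ₂² − 2 = 2cos(8π/7)`. -/
def t3 : ℂ := t2 ^ 2 - 2

/-- The Eisenstein integer `p.1 + p.2·ω` as a complex number. -/
def E (p : ℤ × ℤ) : ℂ := (p.1 : ℂ) + (p.2 : ℂ) * om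

/-- The conjugates of the layer elements:
`X a b c ℓ t = a_ℓ + b_ℓ·t + c_ℓ·t²` evaluated at `t ∈ {θ₁, θ₂, θ₃}`. -/
def X (a b c : Fin 3 → ℤ × ℤ) (ℓ : Fin 3) (t : ℂ) : ℂ :=
  E (a ℓ) + E (b ℓ) * t + E (c ℓ) * t ^ 2

/-- The codeword matrix of the `3×3` perfect space-time code built on the cyclic
division algebra `(ℚ(ω,θ₁)/ℚ(ω), σ, ω)` determined by the coefficients `a b c`. -/
def M3 (a b c : Fin 3 → ℤ × ℤ) : Matrix (Fin 3) (Fin 3) ℂ :=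
  !![X a b c 0 t1, X a b c 1 t1, X a b c 2 t1;
     om * X a b c 2 t2, X a b c 0 t2, X a b c 1 t2;
     om * X a b c 1 t3, om * X a b c 2 t3, X a b c 0 t3]


def nmS {R : Type} [CommRing R] (x0 x1 x2 : R) : R :=
  (-1)*x0*x0*x1 + (3)*x0*x0*x2 + (2)*x0*x1*x1 + (-11)*x0*x1*x2 + (14)*x0*x2*x2 + (-1)*x1*x1*x1 + (7)*x1*x1*x2 + (-14)*x1*x2*x2 + (7)*x2*x2*x2

def trS {R : Type} [CommRing R] (x0 x1 x2 y0 y1 y2 z0 z1 z2 : R) : R :=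
  (-1)*x0*y0*z1 + (3)*x0*y0*z2 + (-1)*x0*y1*z0 + (2)*x0*y1*z1 + (-6)*x0*y1*z2 + (3)*x0*y2*z0 + (-5)*x0*y2*z1 + (14)*x0*y2*z2 + (-1)*x1*y0*z0 + (2)*x1*y0*z1 + (-5)*x1*y0*z2 + (2)*x1*y1*z0 + (-3)*x1*y1*z1 + (7)*x1*y1*z2 + (-6)*x1*y2*z0 + (7)*x1*y2*z1 + (-14)*x1*y2*z2 + (3)*x2*y0*z0 + (-6)*x2*y0*z1 + (14)*x2*y0*z2 + (-5)*x2*y1*z0 + (7)*x2*y1*z1 + (-14)*x2*y1*z2 + (14)*x2*y2*z0 + (-14)*x2*y2*z1 + (21)*x2*y2*z2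

/-- evaluation of a quadratic polynomial -/
def ev {R : Type} [CommRing R] (x0 x1 x2 L : R) : R := x0 + x1 * L + x2 * L ^ 2

theorem norm_id {R : Type} [CommRing R] (L : R) (hL : L ^ 3 + 7 * L ^ 2 + 14 * L + 7 = 0)
    (x0 x1 x2 : R) :
    ev x0 x1 x2 L * ev x0 x1 x2 (L ^ 2 + 4 * L) * ev x0 x1 x2 (-7 - 5 * L - L ^ 2)
      = x0 ^ 3 + 7 * nmS x0 x1 x2 := by
  unfold ev nmS
  linear_combination (((4)*L^0 + (2)*L^1)*(x0*x0*x2) +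
    ((-2)*L^0 + (-1)*L^1)*(x0*x1*x1) +
    ((11)*L^0 + (13)*L^1 + (3)*L^2)*(x0*x1*x2) +
    ((-14)*L^0 + (28)*L^1 + (77)*L^2 + (46)*L^3 + (11)*L^4 + (1)*L^5)*(x0*x2*x2) +
    ((1)*L^0 + (-2)*L^1 + (-1)*L^2)*(x1*x1*x1) +
    ((-7)*L^0 + (14)*L^1 + (7)*L^2)*(x1*x1*x2) +
    ((14)*L^0 + (-28)*L^1 + (42)*L^2 + (82)*L^3 + (45)*L^4 + (11)*L^5 + (1)*L^6)*(x1*x2*x2) +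
    ((-7)*L^0 + (14)*L^1 + (-21)*L^2 + (29)*L^3 + (73)*L^4 + (44)*L^5 + (11)*L^6 + (1)*L^7)*(x2*x2*x2)) * hL

theorem trace_id {R : Type} [CommRing R] (L : R) (hL : L ^ 3 + 7 * L ^ 2 + 14 * L + 7 = 0)
    (x0 x1 x2 y0 y1 y2 z0 z1 z2 : R) :
    ev x0 x1 x2 L * ev y0 y1 y2 (L ^ 2 + 4 * L) * ev z0 z1 z2 (-7 - 5 * L - L ^ 2)
    + ev y0 y1 y2 L * ev z0 z1 z2 (L ^ 2 + 4 * L) * ev x0 x1 x2 (-7 - 5 * L - L ^ 2)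
    + ev z0 z1 z2 L * ev x0 x1 x2 (L ^ 2 + 4 * L) * ev y0 y1 y2 (-7 - 5 * L - L ^ 2)
      = 3 * (x0 * y0 * z0) + 7 * trS x0 x1 x2 y0 y1 y2 z0 z1 z2 := by
  unfold ev trS
  linear_combination (((4)*L^0 + (2)*L^1)*(x0*y0*z2) +
    ((-2)*L^0 + (-1)*L^1)*(x0*y1*z1) +
    ((6)*L^0 + (16)*L^1 + (8)*L^2 + (1)*L^3)*(x0*y1*z2) +
    ((4)*L^0 + (2)*L^1)*(x0*y2*z0) +
    ((5)*L^0 + (-3)*L^1 + (-5)*L^2 + (-1)*L^3)*(x0*y2*z1) +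
    ((-14)*L^0 + (28)*L^1 + (77)*L^2 + (46)*L^3 + (11)*L^4 + (1)*L^5)*(x0*y2*z2) +
    ((-2)*L^0 + (-1)*L^1)*(x1*y0*z1) +
    ((5)*L^0 + (-3)*L^1 + (-5)*L^2 + (-1)*L^3)*(x1*y0*z2) +
    ((-2)*L^0 + (-1)*L^1)*(x1*y1*z0) +
    ((3)*L^0 + (-6)*L^1 + (-3)*L^2)*(x1*y1*z1) +
    ((-7)*L^0 + (14)*L^1 + (7)*L^2)*(x1*y1*z2) +
    ((6)*L^0 + (16)*L^1 + (8)*L^2 + (1)*L^3)*(x1*y2*z0) +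
    ((-7)*L^0 + (14)*L^1 + (7)*L^2)*(x1*y2*z1) +
    ((14)*L^0 + (-28)*L^1 + (42)*L^2 + (82)*L^3 + (45)*L^4 + (11)*L^5 + (1)*L^6)*(x1*y2*z2) +
    ((4)*L^0 + (2)*L^1)*(x2*y0*z0) +
    ((6)*L^0 + (16)*L^1 + (8)*L^2 + (1)*L^3)*(x2*y0*z1) +
    ((-14)*L^0 + (28)*L^1 + (77)*L^2 + (46)*L^3 + (11)*L^4 + (1)*L^5)*(x2*y0*z2) +
    ((5)*L^0 + (-3)*L^1 + (-5)*L^2 + (-1)*L^3)*(x2*y1*z0) +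
    ((-7)*L^0 + (14)*L^1 + (7)*L^2)*(x2*y1*z1) +
    ((14)*L^0 + (-28)*L^1 + (42)*L^2 + (82)*L^3 + (45)*L^4 + (11)*L^5 + (1)*L^6)*(x2*y1*z2) +
    ((-14)*L^0 + (28)*L^1 + (77)*L^2 + (46)*L^3 + (11)*L^4 + (1)*L^5)*(x2*y2*z0) +
    ((14)*L^0 + (-28)*L^1 + (42)*L^2 + (82)*L^3 + (45)*L^4 + (11)*L^5 + (1)*L^6)*(x2*y2*z1) +
    ((-21)*L^0 + (42)*L^1 + (-63)*L^2 + (87)*L^3 + (219)*L^4 + (132)*L^5 + (33)*L^6 + (3)*L^7)*(x2*y2*z2)) * hL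

/-- the reduced norm of `x₀ + x₁ e + x₂ e²` in the basis `1, λ, λ²`, `λ = θ₁ - 2` -/
def redN {R : Type} [CommRing R] (w : R) (a b c : Fin 3 → R) : R :=
  (a 0 ^ 3 + 7 * nmS (a 0) (b 0) (c 0)) + w * (a 1 ^ 3 + 7 * nmS (a 1) (b 1) (c 1))
  + w ^ 2 * (a 2 ^ 3 + 7 * nmS (a 2) (b 2) (c 2))
  - w * (3 * (a 0 * a 1 * a 2)
    + 7 * trS (a 0) (b 0) (c 0) (a 1) (b 1) (c 1) (a 2) (b 2) (c 2))

theorem redN_map {R S : Type} [CommRing R] [CommRing S] (f : R →+* S) (w : R)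
    (a b c : Fin 3 → R) :
    f (redN w a b c) = redN (f w) (fun i => f (a i)) (fun i => f (b i)) (fun i => f (c i)) := by
  simp [redN, nmS, trS, map_ofNat]

theorem redN_smul {R : Type} [CommRing R] (w k : R) (a b c : Fin 3 → R) :
    redN w (fun i => k * a i) (fun i => k * b i) (fun i => k * c i) = k ^ 3 * redN w a b c := by
  simp only [redN, nmS, trS]; ring

theorem redN_shift {R : Type} [CommRing R] (w : R) (a b c : Fin 3 → R) :
    redN w (fun i => 7 * a i) b c
      = -7 * redN w (fun i => b i - 14 * a i) (fun i => c i - 7 * a i) (fun i => - a i) := by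
  simp only [redN, nmS, trS]; ring

set_option maxRecDepth 100000 in
set_option maxHeartbeats 1000000 in
theorem aniso : ∀ x y z : ZMod 7, x ^ 3 + 2 * y ^ 3 + 2 ^ 2 * z ^ 3 - 2 * (3 * (x * y * z)) = 0 →
    x = 0 ∧ y = 0 ∧ z = 0 := by decide

theorem redN_mod (a b c : Fin 3 → ZMod 7) (h : redN 2 a b c = 0) : ∀ i, a i = 0 := by
  have h7 : (7 : ZMod 7) = 0 := by decide
  simp only [redN, h7, zero_mul, add_zero] at h
  obtain ⟨h0, h1, h2⟩ := aniso _ _ _ h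
  intro i
  fin_cases i <;> assumption

abbrev Eis := QuadraticAlgebra ℤ (-1) (-1)

def wE : Eis := ⟨0, 1⟩

theorem om_eq : om ^ 2 + om + 1 = 0 := by
  have hp : IsPrimitiveRoot om 3 := by
    have := Complex.isPrimitiveRoot_exp 3 (by norm_num)
    simpa [om] using this
  have h1 : om ≠ 1 := hp.ne_one (by norm_num)
  have h3 := hp.pow_eq_one
  have : (om - 1) * (om ^ 2 + om + 1) = 0 := by linear_combination h3
  rcases mul_eq_zero.mp this with h | h
  · exact absurd (sub_eq_zero.mp h) h1
  · exact h

theorem normSq_E (g : ℤ × ℤ) :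
    Complex.normSq (E g) = ((g.1 ^ 2 - g.1 * g.2 + g.2 ^ 2 : ℤ) : ℝ) := by
  have h := om_eq
  have hre := congrArg Complex.re h
  have him := congrArg Complex.im h
  simp [pow_two] at hre him
  have hi : om.im ≠ 0 := by
    intro h0
    rw [h0] at hre
    nlinarith [sq_nonneg (2 * om.re + 1)]
  have hr : om.re = -1 / 2 := by
    have : om.im * (2 * om.re + 1) = 0 := by linear_combination him
    rcases mul_eq_zero.mp this with h | h
    · exact absurd h hi
    · linarith
  simp [E, Complex.normSq_apply]
  rw [hr] at hre ⊢
  linear_combination -(g.2 : ℝ) ^ 2 * hre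

def fE : Eis →+* ℂ :=
  (QuadraticAlgebra.lift (R := ℤ) (a := -1) (b := -1) (A := ℂ)
    ⟨om, by simp; linear_combination om_eq⟩).toRingHom

theorem fE_apply (z : Eis) : fE z = E (z.re, z.im) := by
  simp [fE, QuadraticAlgebra.lift, E]

def gE : Eis →+* ZMod 7 :=
  (QuadraticAlgebra.lift (R := ℤ) (a := -1) (b := -1) (A := ZMod 7)
    ⟨2, by simp; decide⟩).toRingHom

theorem gE_apply (z : Eis) : gE z = z.re + z.im * 2 := by
  simp [gE, QuadraticAlgebra.lift]

theorem eis_form_pos (u v : ℤ) (h : ¬ (u = 0 ∧ v = 0)) : 1 ≤ u ^ 2 - u * v + v ^ 2 := by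
  by_contra hc
  apply h
  have hu : u ^ 2 ≤ 0 := by nlinarith [sq_nonneg (2 * v - u)]
  have hv : v ^ 2 ≤ 0 := by nlinarith [sq_nonneg (2 * u - v)]
  exact ⟨by nlinarith [pow_eq_zero_iff (two_ne_zero) |>.mp (le_antisymm hu (sq_nonneg u))],
    pow_eq_zero_iff (two_ne_zero) |>.mp (le_antisymm hv (sq_nonneg v))⟩

theorem fE_inj : Function.Injective fE := by
  rw [injective_iff_map_eq_zero]
  intro z hz
  rw [fE_apply] at hz
  have h := normSq_E (z.re, z.im)
  rw [hz, map_zero] at h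
  by_contra hne
  have : ¬ (z.re = 0 ∧ z.im = 0) := fun h => hne (QuadraticAlgebra.ext h.1 h.2)
  have h1 := eis_form_pos _ _ this
  have h2 := (Int.cast_eq_zero (α := ℝ)).mp h.symm
  simp only at h2
  omega

instance : IsDomain Eis := fE_inj.isDomain fE

def pE : Eis := ⟨-2, 1⟩
def qE : Eis := ⟨-3, -1⟩

theorem pq : pE * qE = 7 := by
  ext
  · simp [pE, qE]; rfl
  · simp [pE, qE]; rfl

theorem dvd_of_gE (z : Eis) (h : gE z = 0) : ∃ y, z = pE * y := by
  rw [gE_apply] at h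
  have h' : ((z.re + z.im * 2 : ℤ) : ZMod 7) = 0 := by push_cast; exact h
  obtain ⟨k, hk⟩ := (ZMod.intCast_zmod_eq_zero_iff_dvd _ 7).mp h'
  refine ⟨⟨z.im - 3 * k, -k⟩, ?_⟩
  push_cast at hk
  ext <;> simp [pE] <;> linarith

theorem gE_dvd_q (z : Eis) (h : gE (qE * z) = 0) : gE z = 0 := by
  rw [map_mul] at h
  have : gE qE = 2 := by rw [gE_apply]; simp [qE]; decide
  rw [this] at h
  revert h
  generalize gE z = t
  revert t
  decide

theorem step0 (a b c : Fin 3 → Eis) (h : redN wE a b c = 0) : ∀ i, gE (a i) = 0 := by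
  have h1 := congrArg gE h
  rw [redN_map, map_zero] at h1
  have : gE wE = 2 := by rw [gE_apply]; simp [wE]
  rw [this] at h1
  exact redN_mod _ _ _ h1

theorem seven_ne : (7 : Eis) ≠ 0 := by
  intro h
  have h7 : (7 : ℤ) = 0 := congrArg QuadraticAlgebra.re h
  norm_num at h7

theorem pE_ne : pE ≠ 0 := by
  intro h
  have := congrArg QuadraticAlgebra.re h
  simp [pE] at this

/-- division of a zero of the reduced norm by the uniformizer -/
theorem step1 (a b c : Fin 3 → Eis) (h : redN wE (fun i => pE * a i) b c = 0) :
    redN wE (fun i => qE * b i - 14 * a i) (fun i => qE * c i - 7 * a i) (fun i => - a i) = 0 := by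
  have h1 := redN_smul wE qE (fun i => pE * a i) b c
  have e : (fun i => qE * (pE * a i)) = fun i => 7 * a i := by
    funext i; rw [← pq]; ring
  rw [h, mul_zero, e, redN_shift] at h1
  rcases mul_eq_zero.mp h1 with h2 | h2
  · exact absurd (neg_eq_zero.mp h2) seven_ne
  · exact h2

theorem step (a b c : Fin 3 → Eis) (h : redN wE a b c = 0) :
    ∃ a' b' c' : Fin 3 → Eis, redN wE a' b' c' = 0 ∧
      (∀ i, a i = pE * a' i) ∧ (∀ i, b i = pE * b' i) ∧ (∀ i, c i = pE * c' i) := by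
  have h7 : gE 7 = 0 := by rw [map_ofNat]; decide
  choose a' ha using fun i => dvd_of_gE _ (step0 a b c h i)
  obtain rfl : a = fun i => pE * a' i := funext ha
  have h1 := step1 _ _ _ h
  have hb0 : ∀ i, gE (b i) = 0 := fun i => by
    have := step0 _ _ _ h1 i
    apply gE_dvd_q
    rw [show qE * b i = (qE * b i - 14 * a' i) + 7 * (2 * a' i) by ring, map_add, this,
      map_mul, h7]
    simp
  choose b' hb using fun i => dvd_of_gE _ (hb0 i)
  obtain rfl : b = fun i => pE * b' i := funext hb
  have e : (fun i => qE * (pE * b' i) - 14 * a' i)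
      = fun i => pE * (qE * (b' i - 2 * a' i)) := by
    funext i
    linear_combination (2 * a' i) * pq
  rw [e] at h1
  have h2 := step1 _ _ _ h1
  have hc0 : ∀ i, gE (c i) = 0 := fun i => by
    have := step0 _ _ _ h2 i
    apply gE_dvd_q
    apply gE_dvd_q
    rw [show qE * (qE * c i) = (qE * (qE * c i - 7 * a' i) - 14 * (qE * (b' i - 2 * a' i)))
      + 7 * (qE * a' i + 2 * (qE * (b' i - 2 * a' i))) by ring, map_add, this,
      map_mul, h7]
    simp
  choose c' hc using fun i => dvd_of_gE _ (hc0 i)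
  obtain rfl : c = fun i => pE * c' i := funext hc
  refine ⟨a', b', c', ?_, ha, hb, hc⟩
  rw [redN_smul] at h
  exact (mul_eq_zero.mp h).resolve_left (pow_ne_zero _ pE_ne)

theorem pow_dvd (n : ℕ) : ∀ a b c : Fin 3 → Eis, redN wE a b c = 0 →
    ∀ i, pE ^ n ∣ a i ∧ pE ^ n ∣ b i ∧ pE ^ n ∣ c i := by
  induction n with
  | zero => intro a b c _ i; simp
  | succ n ih =>
    intro a b c h i
    obtain ⟨a', b', c', h', ha, hb, hc⟩ := step a b c h
    obtain ⟨h1, h2, h3⟩ := ih _ _ _ h' i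
    rw [ha, hb, hc, pow_succ']
    exact ⟨mul_dvd_mul_left _ h1, mul_dvd_mul_left _ h2, mul_dvd_mul_left _ h3⟩

theorem eq_zero_of_pow_dvd (z : Eis) (h : ∀ n : ℕ, pE ^ n ∣ z) : z = 0 := by
  by_contra hne
  have h0 : ¬ (z.re = 0 ∧ z.im = 0) := fun h => hne (QuadraticAlgebra.ext h.1 h.2)
  have h1 := eis_form_pos _ _ h0
  have hN : QuadraticAlgebra.norm z = z.re ^ 2 - z.re * z.im + z.im ^ 2 := by
    rw [QuadraticAlgebra.norm_def]; ring
  have hp : QuadraticAlgebra.norm pE = 7 := by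
    rw [QuadraticAlgebra.norm_def]; simp [pE]
  have hd : ∀ n : ℕ, (7 : ℤ) ^ n ∣ QuadraticAlgebra.norm z := fun n => by
    have := map_dvd (QuadraticAlgebra.norm (R := ℤ) (a := -1) (b := -1)) (h n)
    rwa [map_pow, hp] at this
  rw [← hN] at h1
  have hle := Int.le_of_dvd (by omega) (hd (QuadraticAlgebra.norm z).toNat)
  have hlt : (QuadraticAlgebra.norm z).toNat < 7 ^ (QuadraticAlgebra.norm z).toNat :=
    Nat.lt_pow_self (by norm_num)
  have hlt' : ((QuadraticAlgebra.norm z).toNat : ℤ) < 7 ^ (QuadraticAlgebra.norm z).toNat := by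
    exact_mod_cast hlt
  omega

theorem t1_eq : t1 ^ 3 + t1 ^ 2 - 2 * t1 - 1 = 0 := by
  have hp : IsPrimitiveRoot (Complex.exp (2 * Real.pi * Complex.I / 7)) 7 := by
    have := Complex.isPrimitiveRoot_exp 7 (by norm_num)
    simpa using this
  have ht : t1 = Complex.exp (2 * Real.pi * Complex.I / 7)
      + (Complex.exp (2 * Real.pi * Complex.I / 7))⁻¹ := by
    rw [t1, Complex.ofReal_cos, Complex.cos, ← Complex.exp_neg]
    push_cast
    rw [show 2 * (Real.pi : ℂ) / 7 * Complex.I = 2 * Real.pi * Complex.I / 7 by ring,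
      show -(2 * (Real.pi : ℂ) / 7) * Complex.I = -(2 * Real.pi * Complex.I / 7) by ring]
    ring
  rw [ht]
  generalize Complex.exp (2 * Real.pi * Complex.I / 7) = z at hp
  have hz : z ≠ 0 := hp.ne_zero (by norm_num)
  have h1 : z ≠ 1 := hp.ne_one (by norm_num)
  have hs : z ^ 6 + z ^ 5 + z ^ 4 + z ^ 3 + z ^ 2 + z + 1 = 0 := by
    have : (z - 1) * (z ^ 6 + z ^ 5 + z ^ 4 + z ^ 3 + z ^ 2 + z + 1) = 0 := by
      linear_combination hp.pow_eq_one
    exact (mul_eq_zero.mp this).resolve_left (sub_ne_zero.mpr h1)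
  field_simp
  linear_combination hs

def toE (p : ℤ × ℤ) : Eis := ⟨p.1, p.2⟩

theorem fE_toE (p : ℤ × ℤ) : fE (toE p) = E p := fE_apply _

theorem X_ev (a b c : Fin 3 → ℤ × ℤ) (l : Fin 3) (t L : ℂ) (h : t = L + 2) :
    X a b c l t = ev (fE (toE (a l) + 2 * toE (b l) + 4 * toE (c l)))
      (fE (toE (b l) + 4 * toE (c l))) (fE (toE (c l))) L := by
  subst h
  simp only [map_add, map_mul, fE_toE, X, ev, map_ofNat]
  ring

theorem det_eq (a b c : Fin 3 → ℤ × ℤ) :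
    Matrix.det (M3 a b c) = fE (redN wE (fun l => toE (a l) + 2 * toE (b l) + 4 * toE (c l))
      (fun l => toE (b l) + 4 * toE (c l)) (fun l => toE (c l))) := by
  have h := t1_eq
  have hL : (t1 - 2) ^ 3 + 7 * (t1 - 2) ^ 2 + 14 * (t1 - 2) + 7 = 0 := by
    linear_combination h
  have e2 : t2 = ((t1 - 2) ^ 2 + 4 * (t1 - 2)) + 2 := by rw [t2]; ring
  have e3 : t3 = (-7 - 5 * (t1 - 2) - (t1 - 2) ^ 2) + 2 := by
    rw [t3, t2]; linear_combination (t1 - 1) * h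
  have e1 : t1 = (t1 - 2) + 2 := by ring
  have hw : fE wE = om := by rw [fE_apply]; simp [wE, E]
  rw [redN_map, hw, redN]
  rw [← norm_id _ hL, ← norm_id _ hL, ← norm_id _ hL, ← trace_id _ hL]
  rw [M3, Matrix.det_fin_three]
  simp only [Matrix.of_apply, Matrix.cons_val', Matrix.cons_val_zero, Matrix.cons_val_one,
    Matrix.cons_val, Matrix.cons_val_fin_one]
  simp only [X_ev a b c _ t1 _ e1, X_ev a b c _ t2 _ e2, X_ev a b c _ t3 _ e3]
  ring

/-- Full diversity / non-vanishing determinant of the `3×3` perfect space-time code: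
if the Eisenstein-integer coefficients `a_ℓ, b_ℓ, c_ℓ` are not all zero, then the
determinant of the codeword matrix is a nonzero element of `ℤ[ω]`; in particular its
squared modulus is at least `1`. -/
theorem stmt14 (a b c : Fin 3 → ℤ × ℤ)
    (h : ¬ ∀ ℓ, a ℓ = 0 ∧ b ℓ = 0 ∧ c ℓ = 0) :
    (∃ g : ℤ × ℤ, Matrix.det (M3 a b c) = E g) ∧
    Matrix.det (M3 a b c) ≠ 0 ∧
    1 ≤ Complex.normSq (Matrix.det (M3 a b c)) := by
  rw [det_eq]
  set r := redN wE (fun l => toE (a l) + 2 * toE (b l) + 4 * toE (c l))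
      (fun l => toE (b l) + 4 * toE (c l)) (fun l => toE (c l)) with hr
  have hne : r ≠ 0 := by
    intro h0
    apply h
    intro l
    have hd := fun n => pow_dvd n _ _ _ h0 l
    have hA := eq_zero_of_pow_dvd _ fun n => (hd n).1
    have hB := eq_zero_of_pow_dvd _ fun n => (hd n).2.1
    have hC := eq_zero_of_pow_dvd _ fun n => (hd n).2.2
    have hb : toE (b l) = 0 := by linear_combination hB - 4 * hC
    have ha : toE (a l) = 0 := by linear_combination hA - 2 * hb - 4 * hC
    have key : ∀ p : ℤ × ℤ, toE p = 0 → p = 0 := fun p hp =>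
      Prod.ext (congrArg QuadraticAlgebra.re hp) (congrArg QuadraticAlgebra.im hp)
    exact ⟨key _ ha, key _ hb, key _ hC⟩
  refine ⟨⟨(r.re, r.im), fE_apply r⟩, ?_, ?_⟩
  · intro h0
    exact hne (fE_inj (by rw [h0, map_zero]))
  · rw [fE_apply, normSq_E]
    have := eis_form_pos r.re r.im fun h => hne (QuadraticAlgebra.ext h.1 h.2)
    exact_mod_cast this
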